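/- arXiv:0807.2280 — 2 statements merged into one kernel-verified Lean document; each statement's English description precedes it below -/
import Mathlib

section
/- Lower and upper bounds for the scaled multiplier: Let n ≥ 3, M ≥ 1, R > 0, and set φ_R'(r) = φ₀'(r/R) and φ_R''(r) = (1/R)·φ₀''(r/R). Then for every r > 0: (i) φ_R'(r)/r ≥ M/r + ((n−1)/(2n(n+2)))·min(1/R, R^{n−1}/rⁿ); (ii) φ_R''(r) ≥ ((n−1)/(2n(n+2)))·min(1/R, R^{n−1}/rⁿ); (iii) sup_{r≥0} φ_R'(r) = M + 1/(2n) and sup_{r≥0} φ_R''(r) = 1/(2nR); (iv) for every x ≠ 0, |Δφ_R(x)| ≤ M(n−1)/|x| + 1/(2·max(|x|, R)). -/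
/-!
Write `s = r / R`. The two branches of `φ₀'` agree to first order at `s = 1`, so `φ₀'` is
differentiable, and its derivative `φ₀''` dominates `c · min(1, s⁻ⁿ)` with `c = φ₀''(1)`. As this
minorant is decreasing in `s`, its value at `s` bounds `φ₀''` from below on `[0, s]`, so that
`φ₀'(s) ≥ M + c · s · min(1, s⁻ⁿ)`. It also makes `φ₀'` increasing, so that `sup φ₀'` is the limit
at infinity, while `φ₀''` is largest at `s = 0`.

Away from the origin `Δφ_R = φ_R'' + (n-1) φ_R' / r`. For `s ≤ 1` this equals
`M(n-1)/r + (1 - s²/n)/(2R)`; for `s ≥ 1` the terms in `s⁻ⁿ` cancel, because `r ↦ r^{1-n}` is the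
radial part of the divergence-free field `x/|x|ⁿ`, leaving `M(n-1)/r + (n-1)/(2nr)`.
-/

open MeasureTheory
open scoped BigOperators

noncomputable section

/-- The partial derivative `∂ₖ f` of a real-valued function. -/
noncomputable def pdR {n : ℕ} (f : EuclideanSpace ℝ (Fin n) → ℝ) (k : Fin n)
    (x : EuclideanSpace ℝ (Fin n)) : ℝ :=
  fderiv ℝ f x (EuclideanSpace.single k 1)

/-- The Laplacian `Δf = Σₖ ∂ₖ∂ₖ f` of a real-valued function. -/
noncomputable def lap {n : ℕ} (f : EuclideanSpace ℝ (Fin n) → ℝ)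
    (x : EuclideanSpace ℝ (Fin n)) : ℝ :=
  ∑ k, pdR (pdR f k) k x

/-- The derivative `φ₀'` of the basic radial multiplier. -/
noncomputable def gmult (n : ℕ) (M : ℝ) (r : ℝ) : ℝ :=
  if r ≤ 1 then M + r / (2 * n) - r ^ 3 / (2 * n * (n + 2))
  else M + 1 / (2 * n) - 1 / (2 * n * (n + 2) * r ^ (n - 1))

/-- The basic radial multiplier `φ₀(r) = ∫₀ʳ φ₀'(s) ds`. -/
noncomputable def phi0 (n : ℕ) (M : ℝ) (r : ℝ) : ℝ :=
  ∫ s in (0:ℝ)..r, gmult n M s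

/-- The scaled multiplier `φ_R(x) = R φ₀(|x|/R)`. -/
noncomputable def phiR (n : ℕ) (M R : ℝ) (x : EuclideanSpace ℝ (Fin n)) : ℝ :=
  R * phi0 n M (‖x‖ / R)

lemma hasDerivAt_ite_le {F : Type*} [NormedAddCommGroup F] [NormedSpace ℝ F] {f g : ℝ → F}
    {a : ℝ} {f' : F} (hfg : f a = g a) (hf : HasDerivAt f f' a) (hg : HasDerivAt g f' a) :
    HasDerivAt (fun r => if r ≤ a then f r else g r) f' a := by
  have hleft : HasDerivWithinAt (fun r => if r ≤ a then f r else g r) f' (Set.Iic a) a :=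
    hf.hasDerivWithinAt.congr (fun y hy => if_pos hy) (if_pos le_rfl)
  have hright : HasDerivWithinAt (fun r => if r ≤ a then f r else g r) f' (Set.Ioi a) a :=
    hg.hasDerivWithinAt.congr (fun y hy => if_neg (not_le.2 hy)) ((if_pos le_rfl).trans hfg)
  rw [← hasDerivWithinAt_univ, ← Set.Iic_union_Ioi]
  exact hleft.union hright

section RadialFunction

lemma hasFDerivAt_norm_of_ne_zero {E : Type*} [NormedAddCommGroup E] [InnerProductSpace ℝ E]
    {x : E} (hx : x ≠ 0) : HasFDerivAt (fun y : E => ‖y‖) (‖x‖⁻¹ • innerSL ℝ x) x := by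
  have hx' : ‖x‖ ≠ 0 := norm_ne_zero_iff.2 hx
  have h := (hasStrictFDerivAt_norm_sq x).hasFDerivAt.sqrt (pow_ne_zero 2 hx')
  simp only [Real.sqrt_sq (norm_nonneg _)] at h
  convert! h using 1
  ext v
  simp only [smul_apply, coe_innerSL_apply, smul_eq_mul, one_div, mul_inv_rev, nsmul_eq_mul,
    Nat.cast_ofNat]
  field_simp

variable {n : ℕ} {f g : ℝ → ℝ} {x : EuclideanSpace ℝ (Fin n)}

lemma pdR_comp_norm {f' : ℝ} (hx : x ≠ 0) (hf : HasDerivAt f f' ‖x‖) (k : Fin n) :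
    pdR (fun y => f ‖y‖) k x = f' / ‖x‖ * x k := by
  have h : HasFDerivAt (fun y => f ‖y‖) (f' • ‖x‖⁻¹ • innerSL ℝ x) x :=
    hf.comp_hasFDerivAt x (hasFDerivAt_norm_of_ne_zero hx)
  rw [pdR, h.fderiv]
  simp only [smul_apply, coe_innerSL_apply, EuclideanSpace.inner_single_right,
    Real.ringHom_apply, one_mul, smul_eq_mul]
  ring

lemma pdR_comp_norm_mul_coord {f' : ℝ} (hx : x ≠ 0) (hf : HasDerivAt f f' ‖x‖) (k : Fin n) :
    pdR (fun y => f ‖y‖ * y k) k x = f' / ‖x‖ * x k ^ 2 + f ‖x‖ := by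
  have hradial : DifferentiableAt ℝ (fun y : EuclideanSpace ℝ (Fin n) => f ‖y‖) x :=
    (hf.comp_hasFDerivAt x (hasFDerivAt_norm_of_ne_zero hx)).differentiableAt
  have hcoord : HasFDerivAt (fun y : EuclideanSpace ℝ (Fin n) => y k)
      (EuclideanSpace.proj k : EuclideanSpace ℝ (Fin n) →L[ℝ] ℝ) x :=
    (EuclideanSpace.proj (𝕜 := ℝ) k).hasFDerivAt
  have hpdR : fderiv ℝ (fun y => f ‖y‖) x (EuclideanSpace.single k 1) = f' / ‖x‖ * x k :=
    pdR_comp_norm hx hf k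
  rw [pdR, fderiv_fun_mul hradial hcoord.differentiableAt, hcoord.fderiv]
  simp only [add_apply, smul_apply, PiLp.proj_apply, PiLp.single_eq_same, smul_eq_mul, mul_one,
    hpdR]
  ring

lemma lap_comp_norm {g' : ℝ} (hx : x ≠ 0) (hf : ∀ᶠ t in nhds ‖x‖, HasDerivAt f (g t) t)
    (hg : HasDerivAt g g' ‖x‖) :
    lap (fun y => f ‖y‖) x = g' + ((n : ℝ) - 1) * (g ‖x‖ / ‖x‖) := by
  have hx' : ‖x‖ ≠ 0 := norm_ne_zero_iff.2 hx
  have hquot : HasDerivAt (fun t => g t / t) ((g' * ‖x‖ - g ‖x‖ * 1) / ‖x‖ ^ 2) ‖x‖ :=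
    hg.div (hasDerivAt_id ‖x‖) hx'
  have hgrad (k : Fin n) :
      pdR (fun y => f ‖y‖) k =ᶠ[nhds x] fun y => g ‖y‖ / ‖y‖ * y k := by
    filter_upwards [continuous_norm.continuousAt.eventually hf, isOpen_ne.mem_nhds hx]
      with y hfy hy using pdR_comp_norm hy hfy k
  have hhess (k : Fin n) : pdR (pdR (fun y => f ‖y‖) k) k x =
      (g' * ‖x‖ - g ‖x‖ * 1) / ‖x‖ ^ 2 / ‖x‖ * x k ^ 2 + g ‖x‖ / ‖x‖ := by
    rw [pdR, (hgrad k).fderiv_eq]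
    exact pdR_comp_norm_mul_coord hx hquot k
  rw [lap, Finset.sum_congr rfl fun k _ => hhess k, Finset.sum_add_distrib, ← Finset.mul_sum,
    ← EuclideanSpace.real_norm_sq_eq, Finset.sum_const, Finset.card_univ, Fintype.card_fin,
    nsmul_eq_mul]
  field_simp
  ring

end RadialFunction

section Multiplier

variable {n : ℕ} {s : ℝ}

lemma gmult_of_le_one {M : ℝ} (hs : s ≤ 1) :
    gmult n M s = M + s / (2 * n) - s ^ 3 / (2 * n * (n + 2)) :=
  if_pos hs

lemma gmult_of_one_le {M : ℝ} (hs : 1 ≤ s) :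
    gmult n M s = M + 1 / (2 * n) - 1 / (2 * n * (n + 2) * s ^ (n - 1)) := by
  rcases hs.eq_or_lt with rfl | hs
  · simp [gmult]
  · exact if_neg (not_le.2 hs)

lemma gmult_zero (n : ℕ) (M : ℝ) : gmult n M 0 = M := by
  simp [gmult]

lemma hasDerivAt_gmult_inner (n : ℕ) (M s : ℝ) :
    HasDerivAt (fun r : ℝ => M + r / (2 * n) - r ^ 3 / (2 * n * (n + 2)))
      (1 / (2 * n) - 3 * s ^ 2 / (2 * n * (n + 2))) s :=
  (((hasDerivAt_id s).div_const _).const_add M).sub ((hasDerivAt_pow 3 s).div_const _)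

lemma hasDerivAt_gmult_outer (hn : n ≠ 0) (M : ℝ) (hs : s ≠ 0) :
    HasDerivAt (fun r : ℝ => M + 1 / (2 * n) - 1 / (2 * n * (n + 2) * r ^ (n - 1)))
      (((n : ℝ) - 1) / (2 * n * (n + 2)) * (1 / s ^ n)) s := by
  obtain ⟨m, rfl⟩ := Nat.exists_eq_succ_of_ne_zero hn
  have h := ((hasDerivAt_const s (1 : ℝ)).div
    ((hasDerivAt_pow m s).const_mul (2 * ((m + 1 : ℕ) : ℝ) * ((m + 1 : ℕ) + 2)))
    (by positivity)).const_sub (M + 1 / (2 * ((m + 1 : ℕ) : ℝ)))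
  convert! h using 1
  rcases m with _ | k
  · simp
  · push_cast [Nat.add_sub_cancel, Nat.succ_eq_add_one]
    field_simp
    ring

lemma hasDerivAt_gmult_of_le_one (hn : n ≠ 0) (M : ℝ) (hs : s ≤ 1) :
    HasDerivAt (gmult n M) (1 / (2 * n) - 3 * s ^ 2 / (2 * n * (n + 2))) s := by
  rcases hs.lt_or_eq with hs | rfl
  · refine (hasDerivAt_gmult_inner n M s).congr_of_eventuallyEq ?_
    filter_upwards [Iic_mem_nhds hs] with r hr using gmult_of_le_one hr
  · refine hasDerivAt_ite_le (by simp) (hasDerivAt_gmult_inner n M 1) ?_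
    convert! hasDerivAt_gmult_outer hn M one_ne_zero using 1
    field_simp
    ring

lemma hasDerivAt_gmult_of_one_le (hn : n ≠ 0) (M : ℝ) (hs : 1 ≤ s) :
    HasDerivAt (gmult n M) (((n : ℝ) - 1) / (2 * n * (n + 2)) * (1 / s ^ n)) s := by
  rcases hs.eq_or_lt with rfl | hs
  · convert! hasDerivAt_gmult_of_le_one hn M le_rfl using 1
    field_simp
    ring
  · refine (hasDerivAt_gmult_outer hn M (one_pos.trans hs).ne').congr_of_eventuallyEq ?_
    filter_upwards [Ici_mem_nhds hs] with r hr using gmult_of_one_le hr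

lemma differentiable_gmult (hn : n ≠ 0) (M : ℝ) : Differentiable ℝ (gmult n M) := fun s =>
  (le_total s 1).elim (fun hs => (hasDerivAt_gmult_of_le_one hn M hs).differentiableAt)
    fun hs => (hasDerivAt_gmult_of_one_le hn M hs).differentiableAt

lemma hasDerivAt_phi0 (hn : n ≠ 0) (M s : ℝ) : HasDerivAt (phi0 n M) (gmult n M s) s :=
  ((differentiable_gmult hn M).continuous.integral_hasStrictDerivAt 0 s).hasDerivAt

lemma sub_one_div_nonneg (hn : n ≠ 0) : 0 ≤ ((n : ℝ) - 1) / (2 * n * (n + 2)) := by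
  have hn' : (1 : ℝ) ≤ n := Nat.one_le_cast.2 (Nat.one_le_iff_ne_zero.2 hn)
  exact div_nonneg (sub_nonneg.2 hn') (by positivity)

lemma mul_min_le_deriv_gmult (hn : n ≠ 0) (M : ℝ) (hs : 0 ≤ s) :
    ((n : ℝ) - 1) / (2 * n * (n + 2)) * min 1 (1 / s ^ n) ≤ deriv (gmult n M) s := by
  have hc := sub_one_div_nonneg hn
  rcases le_total s 1 with h | h
  · rw [(hasDerivAt_gmult_of_le_one hn M h).deriv]
    have hs2 : s ^ 2 ≤ 1 := pow_le_one₀ hs h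
    calc ((n : ℝ) - 1) / (2 * n * (n + 2)) * min 1 (1 / s ^ n)
        ≤ ((n : ℝ) - 1) / (2 * n * (n + 2)) * 1 := by gcongr; exact min_le_left _ _
      _ = 1 / (2 * n) - 3 * 1 / (2 * n * (n + 2)) := by field_simp; ring
      _ ≤ 1 / (2 * n) - 3 * s ^ 2 / (2 * n * (n + 2)) := by gcongr
  · rw [(hasDerivAt_gmult_of_one_le hn M h).deriv]
    exact mul_le_mul_of_nonneg_left (min_le_right _ _) hc

lemma add_mul_min_le_gmult (hn : n ≠ 0) (M : ℝ) (hs : 0 ≤ s) :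
    M + ((n : ℝ) - 1) / (2 * n * (n + 2)) * min 1 (1 / s ^ n) * s ≤ gmult n M s := by
  have hc := sub_one_div_nonneg hn
  have hd := differentiable_gmult hn M
  have hderiv : ∀ t ∈ interior (Set.Icc 0 s),
      ((n : ℝ) - 1) / (2 * n * (n + 2)) * min 1 (1 / s ^ n) ≤ deriv (gmult n M) t := by
    rw [interior_Icc]
    rintro t ⟨ht, hts⟩
    refine le_trans ?_ (mul_min_le_deriv_gmult hn M ht.le)
    gcongr
  have h := (convex_Icc 0 s).mul_sub_le_image_sub_of_le_deriv hd.continuous.continuousOn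
    hd.differentiableOn hderiv 0 (Set.left_mem_Icc.2 hs) s (Set.right_mem_Icc.2 hs) hs
  rw [gmult_zero] at h
  linarith

lemma monotoneOn_gmult (hn : n ≠ 0) (M : ℝ) : MonotoneOn (gmult n M) (Set.Ici 0) := by
  have hd := differentiable_gmult hn M
  refine monotoneOn_of_deriv_nonneg (convex_Ici 0) hd.continuous.continuousOn
    hd.differentiableOn fun s hs => ?_
  have hs : 0 ≤ s := interior_subset hs
  have hc := sub_one_div_nonneg hn
  exact le_trans (by positivity) (mul_min_le_deriv_gmult hn M hs)

lemma tendsto_gmult_atTop (hn : 2 ≤ n) (M : ℝ) :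
    Filter.Tendsto (gmult n M) Filter.atTop (nhds (M + 1 / (2 * n))) := by
  have hpow : Filter.Tendsto (fun s : ℝ => 2 * (n : ℝ) * (n + 2) * s ^ (n - 1))
      Filter.atTop Filter.atTop :=
    (Filter.tendsto_pow_atTop (by lia)).const_mul_atTop (by positivity)
  have h := (hpow.const_div_atTop 1).const_sub (M + 1 / (2 * (n : ℝ)))
  rw [sub_zero] at h
  refine h.congr' ?_
  filter_upwards [Filter.eventually_ge_atTop 1] with s hs using (gmult_of_one_le hs).symm

lemma isLUB_gmult (hn : 2 ≤ n) (M : ℝ) :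
    IsLUB (gmult n M '' Set.Ici 0) (M + 1 / (2 * n)) := by
  have hlim := tendsto_gmult_atTop hn M
  refine ⟨?_, fun b hb => le_of_tendsto hlim ?_⟩
  · rintro _ ⟨s, hs, rfl⟩
    refine ge_of_tendsto hlim ?_
    filter_upwards [Filter.eventually_ge_atTop s] with t hst
    exact monotoneOn_gmult (by lia) M hs (hs.trans hst) hst
  · filter_upwards [Filter.eventually_ge_atTop 0] with s hs using hb ⟨s, hs, rfl⟩

lemma deriv_gmult_le (hn : n ≠ 0) (M s : ℝ) : deriv (gmult n M) s ≤ 1 / (2 * n) := by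
  rcases le_total s 1 with hs | hs
  · rw [(hasDerivAt_gmult_of_le_one hn M hs).deriv]
    exact sub_le_self _ (by positivity)
  · rw [(hasDerivAt_gmult_of_one_le hn M hs).deriv]
    have hc := sub_one_div_nonneg hn
    calc ((n : ℝ) - 1) / (2 * n * (n + 2)) * (1 / s ^ n)
        ≤ ((n : ℝ) - 1) / (2 * n * (n + 2)) * 1 := by
          gcongr
          exact (div_le_one (by positivity)).2 (one_le_pow₀ hs)
      _ = 1 / (2 * n) - 3 / (2 * n * (n + 2)) := by field_simp; ring
      _ ≤ 1 / (2 * n) := sub_le_self _ (by positivity)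

lemma isGreatest_deriv_gmult (hn : n ≠ 0) (M : ℝ) :
    IsGreatest (deriv (gmult n M) '' Set.Ici 0) (1 / (2 * n)) := by
  refine ⟨⟨0, Set.self_mem_Ici, ?_⟩, ?_⟩
  · simp [(hasDerivAt_gmult_of_le_one hn M zero_le_one).deriv]
  · rintro _ ⟨s, -, rfl⟩
    exact deriv_gmult_le hn M s

end Multiplier

section Scaling

lemma iSup_Ici_comp_div {α : Type*} [ConditionallyCompleteLattice α] {f : ℝ → α} {a : α} {R : ℝ}
    (hR : 0 < R) (hf : IsLUB (f '' Set.Ici 0) a) :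
    ⨆ r : Set.Ici (0 : ℝ), f (r / R) = a := by
  have hrange : Set.range (fun r : Set.Ici (0 : ℝ) => f (r / R)) = f '' Set.Ici 0 := by
    ext y
    constructor
    · rintro ⟨r, rfl⟩
      exact ⟨r / R, div_nonneg r.2 hR.le, rfl⟩
    · rintro ⟨s, hs, rfl⟩
      exact ⟨⟨s * R, mul_nonneg hs hR.le⟩, by simp [hR.ne']⟩
  exact (hrange ▸ hf).ciSup_eq

variable {n : ℕ} {R : ℝ}

lemma min_one_div_pow_div (hn : n ≠ 0) (hR : 0 < R) (r : ℝ) :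
    min (1 / R) (R ^ (n - 1) / r ^ n) = 1 / R * min 1 (1 / (r / R) ^ n) := by
  rw [mul_min_of_nonneg _ _ (one_div_nonneg.2 hR.le), mul_one, div_pow, one_div_div,
    ← pow_sub_one_mul hn R]
  congr 1
  field_simp

lemma add_mul_min_le_gmult_div (hn : n ≠ 0) (M : ℝ) (hR : 0 < R) {r : ℝ} (hr : 0 < r) :
    M / r + ((n : ℝ) - 1) / (2 * n * (n + 2)) * min (1 / R) (R ^ (n - 1) / r ^ n)
      ≤ gmult n M (r / R) / r := by
  rw [min_one_div_pow_div hn hR, le_div_iff₀ hr]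
  refine le_of_eq_of_le ?_ (add_mul_min_le_gmult hn M (div_nonneg hr.le hR.le))
  field_simp

lemma mul_min_le_deriv_gmult_div (hn : n ≠ 0) (M : ℝ) (hR : 0 < R) {r : ℝ} (hr : 0 ≤ r) :
    ((n : ℝ) - 1) / (2 * n * (n + 2)) * min (1 / R) (R ^ (n - 1) / r ^ n)
      ≤ 1 / R * deriv (gmult n M) (r / R) := by
  rw [min_one_div_pow_div hn hR, mul_left_comm]
  gcongr
  exact mul_min_le_deriv_gmult hn M (div_nonneg hr hR.le)

variable {x : EuclideanSpace ℝ (Fin n)}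

lemma lap_phiR (hn : n ≠ 0) (M : ℝ) (hR : R ≠ 0) (hx : x ≠ 0) :
    lap (phiR n M R) x =
      deriv (gmult n M) (‖x‖ / R) / R + ((n : ℝ) - 1) * (gmult n M (‖x‖ / R) / ‖x‖) := by
  have hphi (t : ℝ) : HasDerivAt (fun t => R * phi0 n M (t / R)) (gmult n M (t / R)) t := by
    have h := ((hasDerivAt_phi0 hn M (t / R)).comp t
      ((hasDerivAt_id t).div_const R)).const_mul R
    convert! h using 1
    field_simp
  have hgmult : HasDerivAt (fun t => gmult n M (t / R))
      (deriv (gmult n M) (‖x‖ / R) / R) ‖x‖ := by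
    have h := (differentiable_gmult hn M (‖x‖ / R)).hasDerivAt.comp ‖x‖
      ((hasDerivAt_id ‖x‖).div_const R)
    rwa [mul_one_div] at h
  exact lap_comp_norm hx (.of_forall hphi) hgmult

lemma lap_phiR_of_norm_le (hn : n ≠ 0) (M : ℝ) (hR : 0 < R) (hx : x ≠ 0) (hxR : ‖x‖ ≤ R) :
    lap (phiR n M R) x =
      M * ((n : ℝ) - 1) / ‖x‖ + (1 - (‖x‖ / R) ^ 2 / n) / (2 * R) := by
  have hx' : ‖x‖ ≠ 0 := norm_ne_zero_iff.2 hx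
  have hs : ‖x‖ / R ≤ 1 := (div_le_one hR).2 hxR
  rw [lap_phiR hn M hR.ne' hx, (hasDerivAt_gmult_of_le_one hn M hs).deriv, gmult_of_le_one hs]
  field_simp
  ring

lemma lap_phiR_of_le_norm (hn : n ≠ 0) (M : ℝ) (hR : 0 < R) (hxR : R ≤ ‖x‖) :
    lap (phiR n M R) x =
      M * ((n : ℝ) - 1) / ‖x‖ + ((n : ℝ) - 1) / n * (1 / (2 * ‖x‖)) := by
  have hx' : 0 < ‖x‖ := hR.trans_le hxR
  have hs : 1 ≤ ‖x‖ / R := (one_le_div hR).2 hxR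
  rw [lap_phiR hn M hR.ne' (norm_pos_iff.1 hx'), (hasDerivAt_gmult_of_one_le hn M hs).deriv,
    gmult_of_one_le hs, ← pow_sub_one_mul hn (‖x‖ / R)]
  field_simp
  ring

lemma abs_lap_phiR_le (hn : n ≠ 0) {M : ℝ} (hM : 0 ≤ M) (hR : 0 < R) (hx : x ≠ 0) :
    |lap (phiR n M R) x| ≤ M * ((n : ℝ) - 1) / ‖x‖ + 1 / (2 * max ‖x‖ R) := by
  have hn' : (1 : ℝ) ≤ n := Nat.one_le_cast.2 (Nat.one_le_iff_ne_zero.2 hn)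
  have : (0 : ℝ) ≤ n - 1 := sub_nonneg.2 hn'
  rcases le_total ‖x‖ R with hxR | hxR
  · have hs : (‖x‖ / R) ^ 2 / n ≤ 1 :=
      div_le_one_of_le₀ ((pow_le_one₀ (by positivity) ((div_le_one hR).2 hxR)).trans hn')
        (by positivity)
    have : 0 ≤ 1 - (‖x‖ / R) ^ 2 / n := sub_nonneg.2 hs
    rw [lap_phiR_of_norm_le hn M hR hx hxR, abs_of_nonneg (by positivity), max_eq_right hxR]
    gcongr
    exact sub_le_self _ (by positivity)
  · have hfrac : ((n : ℝ) - 1) / n ≤ 1 :=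
      div_le_one_of_le₀ (sub_le_self _ zero_le_one) (by positivity)
    rw [lap_phiR_of_le_norm hn M hR hxR, abs_of_nonneg (by positivity), max_eq_left hxR]
    gcongr
    exact mul_le_of_le_one_left (by positivity) hfrac

end Scaling

theorem phiR_bounds_general (n : ℕ) (hn : 2 ≤ n) (M : ℝ) (hM : 0 ≤ M) (R : ℝ) (hR : 0 < R) :
    (∀ r : ℝ, 0 < r →
      M / r + ((n : ℝ) - 1) / (2 * n * (n + 2)) * min (1 / R) (R ^ (n - 1) / r ^ n)
        ≤ gmult n M (r / R) / r)
    ∧ (∀ r : ℝ, 0 < r →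
      ((n : ℝ) - 1) / (2 * n * (n + 2)) * min (1 / R) (R ^ (n - 1) / r ^ n)
        ≤ (1 / R) * deriv (gmult n M) (r / R))
    ∧ (⨆ r : Set.Ici (0 : ℝ), gmult n M ((r : ℝ) / R)) = M + 1 / (2 * n)
    ∧ (⨆ r : Set.Ici (0 : ℝ), (1 / R) * deriv (gmult n M) ((r : ℝ) / R)) = 1 / (2 * n * R)
    ∧ (∀ x : EuclideanSpace ℝ (Fin n), x ≠ 0 →
        |lap (phiR n M R) x| ≤ M * ((n : ℝ) - 1) / ‖x‖ + 1 / (2 * max ‖x‖ R)) := by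
  have hn0 : n ≠ 0 := by lia
  refine ⟨fun r hr => add_mul_min_le_gmult_div hn0 M hR hr,
    fun r hr => mul_min_le_deriv_gmult_div hn0 M hR hr.le,
    iSup_Ici_comp_div hR (isLUB_gmult hn M), ?_, fun x hx => abs_lap_phiR_le hn0 hM hR hx⟩
  rw [← Real.mul_iSup_of_nonneg (one_div_nonneg.2 hR.le),
    iSup_Ici_comp_div hR (isGreatest_deriv_gmult hn0 M).isLUB, one_div_mul_one_div, mul_comm R]

/-- Lower and upper bounds for the scaled multiplier, whose radial derivatives are
`φ_R'(r) = φ₀'(r/R)` and `φ_R''(r) = (1/R)φ₀''(r/R)`: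
(i) `φ_R'(r)/r ≥ M/r + ((n-1)/(2n(n+2))) min(1/R, R^{n-1}/rⁿ)`;
(ii) `φ_R''(r) ≥ ((n-1)/(2n(n+2))) min(1/R, R^{n-1}/rⁿ)`;
(iii) `sup φ_R' = M + 1/(2n)` and `sup φ_R'' = 1/(2nR)`;
(iv) `|Δφ_R(x)| ≤ M(n-1)/|x| + 1/(2 max(|x|,R))` for `x ≠ 0`. -/
theorem phiR_bounds (n : ℕ) (hn : 3 ≤ n) (M : ℝ) (hM : 1 ≤ M) (R : ℝ) (hR : 0 < R) :
    (∀ r : ℝ, 0 < r →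
      M / r + ((n : ℝ) - 1) / (2 * n * (n + 2)) * min (1 / R) (R ^ (n - 1) / r ^ n)
        ≤ gmult n M (r / R) / r)
    ∧ (∀ r : ℝ, 0 < r →
      ((n : ℝ) - 1) / (2 * n * (n + 2)) * min (1 / R) (R ^ (n - 1) / r ^ n)
        ≤ (1 / R) * deriv (gmult n M) (r / R))
    ∧ (⨆ r : Set.Ici (0 : ℝ), gmult n M ((r : ℝ) / R)) = M + 1 / (2 * n)
    ∧ (⨆ r : Set.Ici (0 : ℝ), (1 / R) * deriv (gmult n M) ((r : ℝ) / R)) = 1 / (2 * n * R)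
    ∧ (∀ x : EuclideanSpace ℝ (Fin n), x ≠ 0 →
        |lap (phiR n M R) x| ≤ M * ((n : ℝ) - 1) / ‖x‖ + 1 / (2 * max ‖x‖ R)) :=
  phiR_bounds_general n (by lia) M (by linarith) R hR
end
end

section
/- Smoothing bilinear estimate (endpoint of Lemma 4.2, first part): Let n ≥ 3 and K > 0, let A : ℝⁿ → ℝⁿ be continuous, and let φ ∈ C²(ℝⁿ; ℝ) satisfy |∇φ(x)| ≤ K for all x and |x|·|Δφ(x)| ≤ K for all x ≠ 0. Then for all f, g ∈ C_c^∞(ℝⁿ; ℂ): | ∫_{ℝⁿ} conj(f)·∇_A g·∇φ dx | ≤ K·(1 + 2/(n−2))·‖∇_A f‖_{L²}·‖g‖_{L²}. -/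
/-!
Gauge terms cancel in `D(f̄ g) = f̄ D_A g + conj (D_A f) g` because the potential `A` is real. So
integrating the divergence of the compactly supported field `f̄ g V`, with `V = ∇φ`, gives
`∫ f̄ D_A g(V) = -∫ conj (D_A f(V)) g - ∫ (div V) f̄ g`. The first term is handled by `|V| ≤ K` and
Cauchy–Schwarz; in the second, `|x| |div V| ≤ K` leaves `‖f / |x|‖ ‖g‖`, which the magnetic Hardy
inequality `‖f / |x|‖ ≤ 2 / (n - 2) ‖D_A f‖` controls.

Hardy's inequality is itself the divergence theorem, for `|f|² V` with `V = x / (|x|² + ε)`: here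
`div V ≥ (n - 2) w²` and `|V| ≤ w` for `w = (|x|² + ε)^(-1/2)`, whereas
`|D|f|²| ≤ 2 |f| |D_A f|`, so Cauchy–Schwarz gives `(n - 2) ‖w f‖² ≤ 2 ‖w f‖ ‖D_A f‖`.
Fatou's lemma lets `ε → 0`.
-/

open MeasureTheory Complex
open scoped BigOperators

noncomputable section

/-- The magnetic (covariant) partial derivative `(∂ₖ - i Aₖ) w`. -/
noncomputable def magD {n : ℕ} (A : EuclideanSpace ℝ (Fin n) → EuclideanSpace ℝ (Fin n))
    (k : Fin n) (w : EuclideanSpace ℝ (Fin n) → ℂ) (x : EuclideanSpace ℝ (Fin n)) : ℂ :=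
  fderiv ℝ w x (EuclideanSpace.single k 1) - Complex.I * (A x k : ℂ) * w x

open Filter Topology
open scoped ComplexConjugate Gradient

section CauchySchwarz

variable {α F G H : Type*} {m : MeasurableSpace α} {μ : Measure α} [NormedAddCommGroup F]
  [NormedAddCommGroup G] [NormedAddCommGroup H] {u : α → F} {v : α → G}

lemma lpNorm_two_eq_sqrt (hu : AEStronglyMeasurable u μ) :
    lpNorm u 2 μ = √(∫ x, ‖u x‖ ^ 2 ∂μ) := by
  simp [lpNorm_eq_integral_norm_rpow_toReal two_ne_zero ENNReal.ofNat_ne_top hu,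
    Real.sqrt_eq_rpow]

lemma lpNorm_two_sq (hu : AEStronglyMeasurable u μ) :
    lpNorm u 2 μ ^ 2 = ∫ x, ‖u x‖ ^ 2 ∂μ := by
  rw [lpNorm_two_eq_sqrt hu, Real.sq_sqrt (by positivity)]

lemma integral_norm_mul_norm_le_lpNorm_mul_lpNorm (hu : MemLp u 2 μ) (hv : MemLp v 2 μ) :
    ∫ x, ‖u x‖ * ‖v x‖ ∂μ ≤ lpNorm u 2 μ * lpNorm v 2 μ := by
  have holder := integral_mul_norm_le_Lp_mul_Lq (μ := μ) Real.HolderConjugate.two_two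
    (f := fun x ↦ ‖u x‖) (g := fun x ↦ ‖v x‖) (by simpa using hu.norm) (by simpa using hv.norm)
  simpa [lpNorm_two_eq_sqrt hu.1, lpNorm_two_eq_sqrt hv.1, Real.sqrt_eq_rpow] using holder

lemma norm_integral_le_mul_lpNorm_mul_lpNorm [NormedSpace ℝ H] {w : α → H} {C : ℝ} (hC : 0 ≤ C)
    (hu : MemLp u 2 μ) (hv : MemLp v 2 μ) (hw : ∀ᵐ x ∂μ, ‖w x‖ ≤ C * (‖u x‖ * ‖v x‖)) :
    ‖∫ x, w x ∂μ‖ ≤ C * (lpNorm u 2 μ * lpNorm v 2 μ) :=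
  calc ‖∫ x, w x ∂μ‖ ≤ ∫ x, C * (‖u x‖ * ‖v x‖) ∂μ :=
        norm_integral_le_of_norm_le ((hu.norm.integrable_mul hv.norm).const_mul C) hw
    _ = C * ∫ x, ‖u x‖ * ‖v x‖ ∂μ := integral_const_mul _ _
    _ ≤ C * (lpNorm u 2 μ * lpNorm v 2 μ) := by
        gcongr
        exact integral_norm_mul_norm_le_lpNorm_mul_lpNorm hu hv

end CauchySchwarz

section Divergence

variable {E : Type*} [NormedAddCommGroup E] [NormedSpace ℝ E]

/-- The divergence `div V` of a vector field on a real normed space, as the trace of its Fréchet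
derivative, so that no basis has to be chosen. -/
def divergence (V : E → E) (x : E) : ℝ :=
  LinearMap.trace ℝ E (fderiv ℝ V x)

lemma divergence_eq_sum_coord {ι : Type*} [Fintype ι] (b : Module.Basis ι ℝ E) (V : E → E)
    (x : E) : divergence V x = ∑ i, b.coord i (fderiv ℝ V x (b i)) := by
  classical
  simp [divergence, LinearMap.trace_eq_matrix_trace ℝ b, Matrix.trace, LinearMap.toMatrix_apply]

variable {V : E → E} {x : E}

lemma norm_divergence_smul_conj_mul_le {L : ℝ} (hx : x ≠ 0) (hVL : ‖x‖ * |divergence V x| ≤ L)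
    (z w : ℂ) : ‖divergence V x • (conj z * w)‖ ≤ L * (‖‖x‖⁻¹ • z‖ * ‖w‖) := by
  have hdiv : |divergence V x| ≤ L * ‖x‖⁻¹ := by
    rwa [← div_eq_mul_inv, le_div_iff₀' (norm_pos_iff.2 hx)]
  calc _ = |divergence V x| * (‖z‖ * ‖w‖) := by simp
    _ ≤ L * ‖x‖⁻¹ * (‖z‖ * ‖w‖) := by gcongr
    _ = _ := by
        rw [norm_smul, norm_inv, norm_norm]
        ring

variable [FiniteDimensional ℝ E]

lemma divergence_fun_id (x : E) : divergence (fun y : E ↦ y) x = Module.finrank ℝ E := by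
  simp [divergence]

lemma divergence_fun_smul {c : E → ℝ} (hc : DifferentiableAt ℝ c x)
    (hV : DifferentiableAt ℝ V x) :
    divergence (fun y ↦ c y • V y) x = c x * divergence V x + fderiv ℝ c x (V x) := by
  simp [divergence, fderiv_fun_smul hc hV]

lemma continuous_divergence (hV : ContDiff ℝ 1 V) : Continuous (divergence V) := by
  let trace : (E →L[ℝ] E) →ₗ[ℝ] ℝ := LinearMap.trace ℝ E ∘ₗ ContinuousLinearMap.coeLM ℝ
  exact trace.continuous_of_finiteDimensional.comp (hV.continuous_fderiv one_ne_zero)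

variable [MeasurableSpace E] [BorelSpace E] {μ : Measure E} [μ.IsAddHaarMeasure]

lemma integral_fderiv_apply_eq_neg_integral_divergence_smul {F : Type*} [NormedAddCommGroup F]
    [NormedSpace ℝ F] {h : E → F} (hh : ContDiff ℝ 1 h) (hhc : HasCompactSupport h)
    (hV : ContDiff ℝ 1 V) :
    ∫ x, fderiv ℝ h x (V x) ∂μ = -∫ x, divergence V x • h x ∂μ := by
  let b := Module.finBasis ℝ E
  let coord i : E →L[ℝ] ℝ := (b.coord i).toContinuousLinearMap
  have coord_contDiff i : ContDiff ℝ 1 (fun x ↦ coord i (V x)) := (coord i).contDiff.comp hV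
  have fderiv_coord i x : fderiv ℝ (fun y ↦ coord i (V y)) x (b i)
      = b.coord i (fderiv ℝ V x (b i)) := by
    have := ((coord i).hasFDerivAt.comp x (hV.differentiable one_ne_zero x).hasFDerivAt).fderiv
    simpa [coord, Function.comp_def] using congr($this (b i))
  have integrable_left i : Integrable (fun x ↦ coord i (V x) • fderiv ℝ h x (b i)) μ :=
    ((coord_contDiff i).continuous.smul ((hh.continuous_fderiv one_ne_zero).clm_apply
      continuous_const)).integrable_of_hasCompactSupport (hhc.fderiv_apply ℝ (b i)).smul_left
  have integrable_right i :
      Integrable (fun x ↦ fderiv ℝ (fun y ↦ coord i (V y)) x (b i) • h x) μ :=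
    ((((coord_contDiff i).continuous_fderiv one_ne_zero).clm_apply continuous_const).smul
      hh.continuous).integrable_of_hasCompactSupport hhc.smul_left
  calc ∫ x, fderiv ℝ h x (V x) ∂μ
      = ∫ x, ∑ i, coord i (V x) • fderiv ℝ h x (b i) ∂μ := by
        congr with x
        simp only [coord, LinearMap.coe_toContinuousLinearMap', Module.Basis.coord_apply,
          ← map_smul, ← map_sum, b.sum_repr]
    _ = ∑ i, ∫ x, coord i (V x) • fderiv ℝ h x (b i) ∂μ :=
        integral_finsetSum _ fun i _ ↦ integrable_left i
    _ = ∑ i, -∫ x, fderiv ℝ (fun y ↦ coord i (V y)) x (b i) • h x ∂μ := by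
        congr with i
        exact integral_smul_fderiv_eq_neg_fderiv_smul_of_integrable (integrable_right i)
          (integrable_left i) (((coord_contDiff i).continuous.smul
            hh.continuous).integrable_of_hasCompactSupport hhc.smul_left)
          (fun x _ ↦ (coord_contDiff i).differentiable one_ne_zero x)
          (fun x _ ↦ hh.differentiable one_ne_zero x)
    _ = -∫ x, divergence V x • h x ∂μ := by
        rw [Finset.sum_neg_distrib, ← integral_finsetSum _ fun i _ ↦ integrable_right i]
        simp_rw [divergence_eq_sum_coord b, Finset.sum_smul, fderiv_coord]

end Divergence

section MagneticDerivative

variable {E : Type*} [NormedAddCommGroup E] [NormedSpace ℝ E] {A : E → StrongDual ℝ E}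
  {f g : E → ℂ} {V : E → E} {x : E}

/-- The magnetic derivative `D_A f = Df - i f A`, for a magnetic potential given as a one-form
`A`; `magneticFDeriv A f x v` is the component of the magnetic gradient `∇_A f x` along `v`. -/
def magneticFDeriv (A : E → StrongDual ℝ E) (f : E → ℂ) (x : E) : E →L[ℝ] ℂ :=
  fderiv ℝ f x - (A x).smulRight (I * f x)

lemma continuous_magneticFDeriv (hA : Continuous A) (hf : ContDiff ℝ 1 f) :
    Continuous (magneticFDeriv A f) := by
  have hf' : Continuous (fderiv ℝ f) := hf.continuous_fderiv one_ne_zero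
  have hf₀ : Continuous fun x ↦ I * f x := continuous_const.mul hf.continuous
  exact hf'.sub <| (ContinuousLinearMap.smulRightL ℝ E ℂ).continuous₂.comp (hA.prodMk hf₀)

lemma hasCompactSupport_magneticFDeriv (A : E → StrongDual ℝ E) (hf : HasCompactSupport f) :
    HasCompactSupport (magneticFDeriv A f) :=
  .intro hf fun x hx ↦ by
    ext v
    simp [magneticFDeriv, image_eq_zero_of_notMem_tsupport hx, fderiv_of_notMem_tsupport ℝ hx]

lemma fderiv_conj_mul_apply (A : E → StrongDual ℝ E) (hf : DifferentiableAt ℝ f x)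
    (hg : DifferentiableAt ℝ g x) (v : E) :
    fderiv ℝ (fun y ↦ conj (f y) * g y) x v
      = conj (f x) * magneticFDeriv A g x v + conj (magneticFDeriv A f x v) * g x := by
  have hconj : HasFDerivAt (fun y ↦ conj (f y)) (conjCLE.toContinuousLinearMap ∘L fderiv ℝ f x) x :=
    conjCLE.hasFDerivAt.comp x hf.hasFDerivAt
  rw [(hconj.fun_mul hg.hasFDerivAt).fderiv]
  simp only [magneticFDeriv, add_apply, sub_apply, smul_apply, smul_eq_mul,
    ContinuousLinearMap.comp_apply, ContinuousLinearEquiv.coe_coe, ContinuousAlgEquiv.coeCLE_apply,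
    conjCAE_apply, ContinuousLinearMap.smulRight_apply, real_smul, map_sub, map_mul, conj_ofReal,
    conj_I]
  ring

lemma abs_fderiv_norm_sq_apply_le (A : E → StrongDual ℝ E) (hf : DifferentiableAt ℝ f x) (v : E) :
    |fderiv ℝ (fun y ↦ ‖f y‖ ^ 2) x v| ≤ 2 * (‖magneticFDeriv A f x‖ * ‖v‖ * ‖f x‖) := by
  have gauge_free : fderiv ℝ (fun y ↦ ‖f y‖ ^ 2) x v
      = 2 * inner ℝ (f x) (magneticFDeriv A f x v) := by
    have orthogonal : inner ℝ (f x) (I * f x) = 0 := by simp [Complex.inner, mul_comm]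
    rw [hf.hasFDerivAt.norm_sq.fderiv, magneticFDeriv, sub_apply,
      ContinuousLinearMap.smulRight_apply, inner_sub_right, inner_smul_right, orthogonal,
      mul_zero, sub_zero, two_smul, two_mul]
    rfl
  rw [gauge_free, abs_mul, abs_two, mul_comm _ ‖f x‖]
  gcongr
  exact (abs_real_inner_le_norm _ _).trans (by gcongr; exact (magneticFDeriv A f x).le_opNorm v)

variable [MeasurableSpace E] [BorelSpace E] {μ : Measure E}

lemma memLp_magneticFDeriv [IsFiniteMeasureOnCompacts μ] (hA : Continuous A)
    (hf : ContDiff ℝ 1 f) (hfc : HasCompactSupport f) (p : ENNReal) :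
    MemLp (magneticFDeriv A f) p μ :=
  (continuous_magneticFDeriv hA hf).memLp_of_hasCompactSupport
    (hasCompactSupport_magneticFDeriv A hfc)

variable [FiniteDimensional ℝ E] [μ.IsAddHaarMeasure]

lemma integral_conj_mul_magneticFDeriv (hf : ContDiff ℝ 1 f) (hfc : HasCompactSupport f)
    (hg : ContDiff ℝ 1 g) (hV : ContDiff ℝ 1 V)
    (hint : Integrable (fun x ↦ conj (magneticFDeriv A f x (V x)) * g x) μ) :
    ∫ x, conj (f x) * magneticFDeriv A g x (V x) ∂μ
      = -∫ x, divergence V x • (conj (f x) * g x) ∂μ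
        - ∫ x, conj (magneticFDeriv A f x (V x)) * g x ∂μ := by
  have hfg : ContDiff ℝ 1 fun x ↦ conj (f x) * g x := (conjCLE.contDiff.comp hf).mul hg
  have hfgc : HasCompactSupport fun x ↦ conj (f x) * g x :=
    .intro hfc fun x hx ↦ by simp [image_eq_zero_of_notMem_tsupport hx]
  have hint' : Integrable (fun x ↦ fderiv ℝ (fun y ↦ conj (f y) * g y) x (V x)) μ :=
    ((hfg.continuous_fderiv one_ne_zero).clm_apply hV.continuous).integrable_of_hasCompactSupport <|
      .intro hfgc fun x hx ↦ by simp [fderiv_of_notMem_tsupport ℝ hx]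
  rw [← integral_fderiv_apply_eq_neg_integral_divergence_smul hfg hfgc hV,
    ← integral_sub hint' hint]
  congr with x
  rw [fderiv_conj_mul_apply A (hf.differentiable one_ne_zero x) (hg.differentiable one_ne_zero x)]
  ring

lemma mul_lpNorm_smul_sq_le_of_mul_sq_le_divergence {w : E → ℝ} {c : ℝ} (hw : Continuous w)
    (hV : ContDiff ℝ 1 V) (hVw : ∀ x, ‖V x‖ ≤ w x) (hdiv : ∀ x, c * w x ^ 2 ≤ divergence V x)
    (hf : ContDiff ℝ 1 f) (hfc : HasCompactSupport f) (hDf : MemLp (magneticFDeriv A f) 2 μ) :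
    c * lpNorm (fun x ↦ w x • f x) 2 μ ^ 2
      ≤ 2 * (lpNorm (magneticFDeriv A f) 2 μ * lpNorm (fun x ↦ w x • f x) 2 μ) := by
  have hwf : MemLp (fun x ↦ w x • f x) 2 μ :=
    (hw.smul hf.continuous).memLp_of_hasCompactSupport hfc.smul_left
  have hfsq : HasCompactSupport fun x ↦ ‖f x‖ ^ 2 :=
    .intro hfc fun x hx ↦ by simp [image_eq_zero_of_notMem_tsupport hx]
  have hdivf : Integrable (fun x ↦ divergence V x • ‖f x‖ ^ 2) μ :=
    ((continuous_divergence hV).smul (hf.continuous.norm.pow 2)).integrable_of_hasCompactSupport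
      hfsq.smul_left
  calc _ = ∫ x, c * ‖w x • f x‖ ^ 2 ∂μ := by rw [lpNorm_two_sq hwf.1, integral_const_mul]
    _ ≤ ∫ x, divergence V x • ‖f x‖ ^ 2 ∂μ := by
        refine integral_mono (hwf.norm.integrable_sq.const_mul c) hdivf fun x ↦ ?_
        simpa [norm_smul, mul_pow, mul_assoc] using
          mul_le_mul_of_nonneg_right (hdiv x) (sq_nonneg ‖f x‖)
    _ ≤ ‖∫ x, fderiv ℝ (fun y ↦ ‖f y‖ ^ 2) x (V x) ∂μ‖ := by
        rw [integral_fderiv_apply_eq_neg_integral_divergence_smul (hf.norm_sq ℝ) hfsq hV, norm_neg]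
        exact Real.le_norm_self _
    _ ≤ _ := by
        refine norm_integral_le_mul_lpNorm_mul_lpNorm zero_le_two hDf hwf (.of_forall fun x ↦ ?_)
        refine (abs_fderiv_norm_sq_apply_le A (hf.differentiable one_ne_zero x) (V x)).trans ?_
        rw [norm_smul, ← mul_assoc ‖magneticFDeriv A f x‖]
        gcongr
        exact (hVw x).trans (Real.le_norm_self _)

lemma lpNorm_smul_le_of_mul_sq_le_divergence {w : E → ℝ} {c : ℝ} (hc : 0 < c) (hw : Continuous w)
    (hV : ContDiff ℝ 1 V) (hVw : ∀ x, ‖V x‖ ≤ w x) (hdiv : ∀ x, c * w x ^ 2 ≤ divergence V x)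
    (hf : ContDiff ℝ 1 f) (hfc : HasCompactSupport f) (hDf : MemLp (magneticFDeriv A f) 2 μ) :
    lpNorm (fun x ↦ w x • f x) 2 μ ≤ 2 / c * lpNorm (magneticFDeriv A f) 2 μ := by
  have hsq := mul_lpNorm_smul_sq_le_of_mul_sq_le_divergence hw hV hVw hdiv hf hfc hDf
  rcases (lpNorm_nonneg (f := fun x ↦ w x • f x) (p := 2) (μ := μ)).eq_or_lt with hzero | hpos
  · rw [← hzero]
    have := lpNorm_nonneg (f := magneticFDeriv A f) (p := 2) (μ := μ)
    positivity
  · rw [div_mul_eq_mul_div, le_div_iff₀ hc]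
    exact le_of_mul_le_mul_right (by linarith) hpos

end MagneticDerivative

section Hardy

lemma continuous_inv_sqrt_norm_sq_add {E : Type*} [SeminormedAddCommGroup E] {ε : ℝ} (hε : 0 < ε) :
    Continuous fun x : E ↦ (√(‖x‖ ^ 2 + ε))⁻¹ :=
  .inv₀ (by fun_prop) fun _ ↦ by positivity

variable {E : Type*} [NormedAddCommGroup E] [InnerProductSpace ℝ E] {ε : ℝ}

/-- The smooth approximation `x / (‖x‖² + ε)` of the vector field `x / ‖x‖²`. -/
def hardyField (ε : ℝ) (x : E) : E :=
  (‖x‖ ^ 2 + ε)⁻¹ • x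

lemma contDiff_hardyField (hε : 0 < ε) {m : WithTop ℕ∞} : ContDiff ℝ m (hardyField ε : E → E) :=
  (((contDiff_norm_sq ℝ).add contDiff_const).inv fun _ ↦ by positivity).smul contDiff_id

lemma norm_hardyField_le (hε : 0 < ε) (x : E) : ‖hardyField ε x‖ ≤ (√(‖x‖ ^ 2 + ε))⁻¹ := by
  have hpos : 0 < ‖x‖ ^ 2 + ε := by positivity
  have hx : ‖x‖ ≤ √(‖x‖ ^ 2 + ε) := Real.le_sqrt_of_sq_le (by linarith)
  calc ‖hardyField ε x‖ = (‖x‖ ^ 2 + ε)⁻¹ * ‖x‖ := by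
        rw [hardyField, norm_smul, norm_inv, Real.norm_of_nonneg hpos.le]
    _ ≤ (‖x‖ ^ 2 + ε)⁻¹ * √(‖x‖ ^ 2 + ε) := by gcongr
    _ = (√(‖x‖ ^ 2 + ε))⁻¹ := by rw [inv_mul_eq_div, Real.sqrt_div_self', one_div]

variable [FiniteDimensional ℝ E]

lemma divergence_hardyField (hε : 0 < ε) (x : E) :
    divergence (hardyField ε) x
      = (‖x‖ ^ 2 + ε)⁻¹ * Module.finrank ℝ E - 2 * ‖x‖ ^ 2 / (‖x‖ ^ 2 + ε) ^ 2 := by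
  have hne : ‖x‖ ^ 2 + ε ≠ 0 := by positivity
  have hinv : HasFDerivAt (fun y : E ↦ (‖y‖ ^ 2 + ε)⁻¹)
      (-((‖x‖ ^ 2 + ε) ^ 2)⁻¹ • (2 • innerSL ℝ x)) x :=
    (hasDerivAt_inv hne).comp_hasFDerivAt x
      ((hasStrictFDerivAt_norm_sq x).hasFDerivAt.add_const ε)
  have hdiv := divergence_fun_smul hinv.differentiableAt differentiableAt_fun_id
  rw [divergence_fun_id, hinv.fderiv] at hdiv
  refine hdiv.trans ?_
  simp only [neg_smul, neg_apply, smul_apply, coe_innerSL_apply, real_inner_self_eq_norm_sq,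
    nsmul_eq_mul, Nat.cast_ofNat, smul_eq_mul]
  ring

lemma mul_sq_le_divergence_hardyField (hε : 0 < ε) (x : E) :
    (Module.finrank ℝ E - 2) * (√(‖x‖ ^ 2 + ε))⁻¹ ^ 2 ≤ divergence (hardyField ε) x := by
  have hpos : 0 < ‖x‖ ^ 2 + ε := by positivity
  have hratio : 2 * ‖x‖ ^ 2 / (‖x‖ ^ 2 + ε) ^ 2 ≤ 2 * (‖x‖ ^ 2 + ε)⁻¹ := by
    rw [← div_eq_mul_inv, div_le_div_iff₀ (by positivity) hpos]
    nlinarith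
  rw [divergence_hardyField hε, inv_pow, Real.sq_sqrt hpos.le]
  linarith

variable [MeasurableSpace E] [BorelSpace E] {μ : Measure E} [μ.IsAddHaarMeasure]
  {A : E → StrongDual ℝ E} {f : E → ℂ}

lemma lpNorm_inv_sqrt_norm_sq_add_smul_le (hE : 2 < Module.finrank ℝ E) (hf : ContDiff ℝ 1 f)
    (hfc : HasCompactSupport f) (hDf : MemLp (magneticFDeriv A f) 2 μ) (hε : 0 < ε) :
    lpNorm (fun x ↦ (√(‖x‖ ^ 2 + ε))⁻¹ • f x) 2 μ
      ≤ 2 / (Module.finrank ℝ E - 2) * lpNorm (magneticFDeriv A f) 2 μ :=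
  lpNorm_smul_le_of_mul_sq_le_divergence (sub_pos.2 (by exact_mod_cast hE))
    (continuous_inv_sqrt_norm_sq_add hε) (contDiff_hardyField hε) (norm_hardyField_le hε)
    (mul_sq_le_divergence_hardyField hε) hf hfc hDf

lemma eLpNorm_inv_norm_smul_le (hE : 2 < Module.finrank ℝ E) (hf : ContDiff ℝ 1 f)
    (hfc : HasCompactSupport f) (hDf : MemLp (magneticFDeriv A f) 2 μ) :
    eLpNorm (fun x ↦ ‖x‖⁻¹ • f x) 2 μ
      ≤ .ofReal (2 / (Module.finrank ℝ E - 2) * lpNorm (magneticFDeriv A f) 2 μ) := by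
  have : Nontrivial E := Module.nontrivial_of_finrank_pos (R := ℝ) (by omega)
  let u (m : ℕ) (x : E) : ℂ := (√(‖x‖ ^ 2 + 1 / ((m : ℝ) + 1)))⁻¹ • f x
  have hu m : MemLp (u m) 2 μ :=
    ((continuous_inv_sqrt_norm_sq_add (by positivity)).smul
      hf.continuous).memLp_of_hasCompactSupport hfc.smul_left
  have hlim : ∀ᵐ x ∂μ, Tendsto (u · x) atTop (𝓝 (‖x‖⁻¹ • f x)) := by
    filter_upwards [μ.ae_ne 0] with x hx
    have hsqrt : Tendsto (fun m : ℕ ↦ √(‖x‖ ^ 2 + 1 / ((m : ℝ) + 1))) atTop (𝓝 ‖x‖) := by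
      have hsq : Tendsto (fun m : ℕ ↦ ‖x‖ ^ 2 + 1 / ((m : ℝ) + 1)) atTop (𝓝 (‖x‖ ^ 2)) := by
        simpa only [add_zero] using tendsto_one_div_add_atTop_nhds_zero_nat.const_add (‖x‖ ^ 2)
      simpa only [Real.sqrt_sq (norm_nonneg x)] using hsq.sqrt
    exact (hsqrt.inv₀ (norm_ne_zero_iff.2 hx)).smul_const (f x)
  refine (Lp.eLpNorm_lim_le_liminf_eLpNorm (fun m ↦ (hu m).1) _ hlim).trans <|
    liminf_le_of_frequently_le' <| .of_forall fun m ↦ ?_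
  rw [← ofReal_lpNorm (hu m)]
  exact ENNReal.ofReal_le_ofReal
    (lpNorm_inv_sqrt_norm_sq_add_smul_le hE hf hfc hDf (by positivity))

lemma memLp_inv_norm_smul (hE : 2 < Module.finrank ℝ E) (hf : ContDiff ℝ 1 f)
    (hfc : HasCompactSupport f) (hDf : MemLp (magneticFDeriv A f) 2 μ) :
    MemLp (fun x ↦ ‖x‖⁻¹ • f x) 2 μ :=
  ⟨(measurable_norm.inv.smul hf.continuous.measurable).aestronglyMeasurable,
    (eLpNorm_inv_norm_smul_le hE hf hfc hDf).trans_lt ENNReal.ofReal_lt_top⟩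

theorem magnetic_hardy_inequality (hE : 2 < Module.finrank ℝ E) (hf : ContDiff ℝ 1 f)
    (hfc : HasCompactSupport f) (hDf : MemLp (magneticFDeriv A f) 2 μ) :
    lpNorm (fun x ↦ ‖x‖⁻¹ • f x) 2 μ
      ≤ 2 / (Module.finrank ℝ E - 2) * lpNorm (magneticFDeriv A f) 2 μ := by
  have hd : (2 : ℝ) < Module.finrank ℝ E := by exact_mod_cast hE
  have hhardy := eLpNorm_inv_norm_smul_le hE hf hfc hDf
  rw [← ofReal_lpNorm (memLp_inv_norm_smul hE hf hfc hDf)] at hhardy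
  exact (ENNReal.ofReal_le_ofReal_iff
    (mul_nonneg (div_nonneg zero_le_two (sub_nonneg.2 hd.le)) lpNorm_nonneg)).1 hhardy

theorem norm_integral_conj_mul_magneticFDeriv_apply_le (hE : 2 < Module.finrank ℝ E) {g : E → ℂ}
    {V : E → E} {K L : ℝ} (hV : ContDiff ℝ 1 V) (hVK : ∀ x, ‖V x‖ ≤ K)
    (hVL : ∀ x, ‖x‖ * |divergence V x| ≤ L) (hf : ContDiff ℝ 1 f) (hfc : HasCompactSupport f)
    (hDf : MemLp (magneticFDeriv A f) 2 μ) (hg : ContDiff ℝ 1 g) (hgL : MemLp g 2 μ) :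
    ‖∫ x, conj (f x) * magneticFDeriv A g x (V x) ∂μ‖
      ≤ (K + L * (2 / (Module.finrank ℝ E - 2))) * lpNorm (magneticFDeriv A f) 2 μ
        * lpNorm g 2 μ := by
  have : Nontrivial E := Module.nontrivial_of_finrank_pos (R := ℝ) (by omega)
  have hK : 0 ≤ K := (norm_nonneg _).trans (hVK 0)
  have hL : 0 ≤ L := by simpa using hVL 0
  have magnetic_bound x :
      ‖conj (magneticFDeriv A f x (V x)) * g x‖ ≤ K * (‖magneticFDeriv A f x‖ * ‖g x‖) := by
    rw [norm_mul, RCLike.norm_conj, ← mul_assoc, mul_comm K]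
    gcongr
    exact (magneticFDeriv A f x).le_opNorm_of_le (hVK x)
  have hDfV : AEStronglyMeasurable (fun x ↦ magneticFDeriv A f x (V x)) μ :=
    isBoundedBilinearMap_apply.continuous.comp_aestronglyMeasurable
      (hDf.1.prodMk hV.continuous.aestronglyMeasurable)
  have hint : Integrable (fun x ↦ conj (magneticFDeriv A f x (V x)) * g x) μ :=
    ((hDf.norm.integrable_mul hgL.norm).const_mul K).mono'
      ((continuous_conj.comp_aestronglyMeasurable hDfV).mul hgL.1) (.of_forall magnetic_bound)
  calc _ ≤ ‖∫ x, divergence V x • (conj (f x) * g x) ∂μ‖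
          + ‖∫ x, conj (magneticFDeriv A f x (V x)) * g x ∂μ‖ := by
        rw [integral_conj_mul_magneticFDeriv hf hfc hg hV hint]
        exact (norm_sub_le _ _).trans_eq (by rw [norm_neg])
    _ ≤ L * (lpNorm (fun x ↦ ‖x‖⁻¹ • f x) 2 μ * lpNorm g 2 μ)
          + K * (lpNorm (magneticFDeriv A f) 2 μ * lpNorm g 2 μ) := by
        gcongr
        · exact norm_integral_le_mul_lpNorm_mul_lpNorm hL (memLp_inv_norm_smul hE hf hfc hDf) hgL
            ((μ.ae_ne 0).mono fun x hx ↦ norm_divergence_smul_conj_mul_le hx (hVL x) _ _)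
        · exact norm_integral_le_mul_lpNorm_mul_lpNorm hK hDf hgL (.of_forall magnetic_bound)
    _ ≤ L * (2 / (Module.finrank ℝ E - 2) * lpNorm (magneticFDeriv A f) 2 μ * lpNorm g 2 μ)
          + K * (lpNorm (magneticFDeriv A f) 2 μ * lpNorm g 2 μ) := by
        gcongr
        · exact lpNorm_nonneg
        · exact magnetic_hardy_inequality hE hf hfc hDf
    _ = _ := by ring

end Hardy

section Coordinates

open EuclideanSpace (single basisFun)

variable {n : ℕ} {A : EuclideanSpace ℝ (Fin n) → EuclideanSpace ℝ (Fin n)}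
  {φ : EuclideanSpace ℝ (Fin n) → ℝ} {f : EuclideanSpace ℝ (Fin n) → ℂ}

lemma norm_le_sqrt_sum_norm_apply_single_sq {ι F : Type*} [Fintype ι] [DecidableEq ι]
    [NormedAddCommGroup F] [NormedSpace ℝ F] (T : EuclideanSpace ℝ ι →L[ℝ] F) :
    ‖T‖ ≤ √(∑ k, ‖T (single k 1)‖ ^ 2) := by
  refine T.opNorm_le_bound (by positivity) fun v ↦ ?_
  calc ‖T v‖ = ‖∑ k, v k • T (single k 1)‖ := by
        simpa using congr(‖T $((basisFun ι ℝ).sum_repr v)‖).symm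
    _ ≤ ∑ k, ‖T (single k 1)‖ * ‖v k‖ :=
        norm_sum_le_of_le _ fun k _ ↦ by rw [norm_smul, mul_comm]
    _ ≤ √(∑ k, ‖T (single k 1)‖ ^ 2) * ‖v‖ := by
        rw [EuclideanSpace.norm_eq v]
        exact Real.sum_mul_le_sqrt_mul_sqrt _ _ _

lemma magneticFDeriv_innerSL_apply_single (A : EuclideanSpace ℝ (Fin n) → EuclideanSpace ℝ (Fin n))
    (f : EuclideanSpace ℝ (Fin n) → ℂ) (x : EuclideanSpace ℝ (Fin n)) (k : Fin n) :
    magneticFDeriv (fun y ↦ innerSL ℝ (A y)) f x (single k 1) = magD A k f x := by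
  simp only [magneticFDeriv, magD, sub_apply, ContinuousLinearMap.smulRight_apply,
    coe_innerSL_apply, EuclideanSpace.inner_single_right, Real.ringHom_apply, one_mul, real_smul]
  ring

lemma gradient_apply_eq_pdR (φ : EuclideanSpace ℝ (Fin n) → ℝ) (x : EuclideanSpace ℝ (Fin n))
    (k : Fin n) : ∇ φ x k = pdR φ k x := by
  rw [pdR, ← inner_gradient_left, EuclideanSpace.inner_single_right]
  simp

lemma norm_gradient_eq_sqrt_sum_pdR_sq (φ : EuclideanSpace ℝ (Fin n) → ℝ)
    (x : EuclideanSpace ℝ (Fin n)) : ‖∇ φ x‖ = √(∑ k, pdR φ k x ^ 2) := by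
  simp [EuclideanSpace.norm_eq, gradient_apply_eq_pdR]

lemma magneticFDeriv_innerSL_apply_gradient
    (A : EuclideanSpace ℝ (Fin n) → EuclideanSpace ℝ (Fin n)) (f : EuclideanSpace ℝ (Fin n) → ℂ)
    (φ : EuclideanSpace ℝ (Fin n) → ℝ) (x : EuclideanSpace ℝ (Fin n)) :
    magneticFDeriv (fun y ↦ innerSL ℝ (A y)) f x (∇ φ x)
      = ∑ k, magD A k f x * (pdR φ k x : ℂ) := by
  rw [← (basisFun (Fin n) ℝ).sum_repr (∇ φ x)]
  simp [magneticFDeriv_innerSL_apply_single, gradient_apply_eq_pdR, mul_comm]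

lemma contDiff_gradient {E : Type*} [NormedAddCommGroup E] [InnerProductSpace ℝ E]
    [CompleteSpace E] {φ : E → ℝ} (hφ : ContDiff ℝ 2 φ) : ContDiff ℝ 1 (∇ φ) :=
  (InnerProductSpace.toDual ℝ E).symm.contDiff.comp (hφ.fderiv_right (by norm_num))

lemma divergence_gradient_eq_lap (hφ : ContDiff ℝ 2 φ) (x : EuclideanSpace ℝ (Fin n)) :
    divergence (∇ φ) x = lap φ x := by
  have hd := ((contDiff_gradient hφ).differentiable one_ne_zero x).hasFDerivAt
  rw [divergence_eq_sum_coord (basisFun (Fin n) ℝ).toBasis, lap]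
  congr with k
  have hk : HasFDerivAt (pdR φ k) (EuclideanSpace.proj k ∘L fderiv ℝ (∇ φ) x) x := by
    rw [← funext (gradient_apply_eq_pdR φ · k)]
    exact (EuclideanSpace.proj k : _ →L[ℝ] ℝ).hasFDerivAt.comp x hd
  rw [pdR, hk.fderiv]
  simp

lemma lpNorm_magneticFDeriv_innerSL_le (hA : Continuous A) (hf : ContDiff ℝ 1 f)
    (hfc : HasCompactSupport f) :
    lpNorm (magneticFDeriv (fun y ↦ innerSL ℝ (A y)) f) 2 volume
      ≤ √(∫ x, ∑ k, ‖magD A k f x‖ ^ 2) := by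
  have hA' : Continuous fun y ↦ innerSL ℝ (A y) := by fun_prop
  have hDf := memLp_magneticFDeriv (μ := volume) hA' hf hfc 2
  have hmagD k : MemLp (magD A k f) 2 := by
    rw [← funext (magneticFDeriv_innerSL_apply_single A f · k)]
    exact (ContinuousLinearMap.apply ℝ ℂ (single k (1 : ℝ))).comp_memLp' hDf
  rw [lpNorm_two_eq_sqrt hDf.1]
  refine Real.sqrt_le_sqrt <| integral_mono hDf.norm.integrable_sq
    (integrable_finsetSum _ fun k _ ↦ (hmagD k).norm.integrable_sq) fun x ↦ ?_
  rw [← Real.le_sqrt (norm_nonneg _) (by positivity)]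
  simpa only [magneticFDeriv_innerSL_apply_single] using
    norm_le_sqrt_sum_norm_apply_single_sq (magneticFDeriv (fun y ↦ innerSL ℝ (A y)) f x)

theorem smoothing_bilinear_estimate_general {g : EuclideanSpace ℝ (Fin n) → ℂ} {K L : ℝ}
    (hn : 3 ≤ n) (hA : Continuous A) (hφ : ContDiff ℝ 2 φ)
    (hgrad : ∀ x, √(∑ k, pdR φ k x ^ 2) ≤ K) (hlap : ∀ x, ‖x‖ * |lap φ x| ≤ L)
    (hf : ContDiff ℝ 1 f) (hfc : HasCompactSupport f) (hg : ContDiff ℝ 1 g) (hgL : MemLp g 2) :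
    ‖∫ x, conj (f x) * ∑ k, magD A k g x * (pdR φ k x : ℂ)‖
      ≤ (K + L * (2 / (n - 2))) * √(∫ x, ∑ k, ‖magD A k f x‖ ^ 2) * √(∫ x, ‖g x‖ ^ 2) := by
  have hDf : MemLp (magneticFDeriv (fun y ↦ innerSL ℝ (A y)) f) 2 :=
    memLp_magneticFDeriv (by fun_prop) hf hfc 2
  have hfinrank : Module.finrank ℝ (EuclideanSpace ℝ (Fin n)) = n := finrank_euclideanSpace_fin
  have estimate := norm_integral_conj_mul_magneticFDeriv_apply_le (by omega)
    (contDiff_gradient hφ) (fun x ↦ (norm_gradient_eq_sqrt_sum_pdR_sq φ x).trans_le (hgrad x))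
    (fun x ↦ (divergence_gradient_eq_lap hφ x).symm ▸ hlap x) hf hfc hDf hg hgL
  simp_rw [magneticFDeriv_innerSL_apply_gradient, hfinrank, lpNorm_two_eq_sqrt hgL.1] at estimate
  refine estimate.trans ?_
  have hK : 0 ≤ K := (Real.sqrt_nonneg _).trans (hgrad 0)
  have hL : 0 ≤ L := by simpa using hlap 0
  have hn₂ : (0 : ℝ) < n - 2 := sub_pos.2 (by exact_mod_cast hn)
  gcongr
  exact lpNorm_magneticFDeriv_innerSL_le hA hf hfc

end Coordinates

/-- Smoothing bilinear estimate: if `|∇φ| ≤ K` and `|x||Δφ| ≤ K`, then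
`|∫ conj f ∇_A g·∇φ| ≤ K(1 + 2/(n-2)) ‖∇_A f‖_{L²} ‖g‖_{L²}`. -/
theorem smoothing_bilinear_estimate (n : ℕ) (hn : 3 ≤ n) (K : ℝ) (hK : 0 < K)
    (A : EuclideanSpace ℝ (Fin n) → EuclideanSpace ℝ (Fin n)) (hA : Continuous A)
    (φ : EuclideanSpace ℝ (Fin n) → ℝ) (hφ : ContDiff ℝ 2 φ)
    (hgrad : ∀ x : EuclideanSpace ℝ (Fin n), Real.sqrt (∑ k, (pdR φ k x) ^ 2) ≤ K)
    (hlap : ∀ x : EuclideanSpace ℝ (Fin n), x ≠ 0 → ‖x‖ * |lap φ x| ≤ K)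
    (f g : EuclideanSpace ℝ (Fin n) → ℂ)
    (hf : ContDiff ℝ (⊤ : ℕ∞) f) (hfc : HasCompactSupport f)
    (hg : ContDiff ℝ (⊤ : ℕ∞) g) (hgc : HasCompactSupport g) :
    ‖∫ x : EuclideanSpace ℝ (Fin n),
        (starRingEnd ℂ) (f x) * ∑ k, magD A k g x * (pdR φ k x : ℂ)‖
      ≤ K * (1 + 2 / ((n : ℝ) - 2)) *
          Real.sqrt (∫ x : EuclideanSpace ℝ (Fin n), ∑ k, ‖magD A k f x‖ ^ 2) *
          Real.sqrt (∫ x : EuclideanSpace ℝ (Fin n), ‖g x‖ ^ 2) := by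
  have hlap' x : ‖x‖ * |lap φ x| ≤ K :=
    (eq_or_ne x 0).elim (by rintro rfl; simpa using hK.le) (hlap x)
  simpa only [mul_one_add] using smoothing_bilinear_estimate_general hn hA hφ hgrad hlap'
    (hf.of_le (by exact_mod_cast le_top)) hfc (hg.of_le (by exact_mod_cast le_top))
    (hg.continuous.memLp_of_hasCompactSupport hgc)
end
end
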